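/- arXiv:2501.07891 — 3 statements merged into one kernel-verified Lean document; each statement's English description precedes it below -/
import Mathlib

section
/- Let n ≥ 1, let ρ, σ be n×n complex matrices, let S be the swap operator on ℂⁿ⊗ℂⁿ, and let t be real. Then Tr₁[exp(−i t S)(ρ⊗σ)exp(i t S)] = cos²(t)·Tr(ρ)·σ + sin²(t)·Tr(σ)·ρ − i·sin(t)cos(t)·(ρσ − σρ), where Tr₁ denotes the partial trace over the first tensor factor. -/
open Matrix
open scoped Kronecker

/-- The swap operator `S` on `ℂⁿ ⊗ ℂⁿ`, with entries `S[(i,j),(k,l)] = δ_{i,l} δ_{j,k}`. -/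
noncomputable def swapOp (n : ℕ) : Matrix (Fin n × Fin n) (Fin n × Fin n) ℂ :=
  Matrix.of fun p q => if p.1 = q.2 ∧ p.2 = q.1 then 1 else 0

/-- Partial trace over the first tensor factor:
`(Tr₁ M)[j,l] = Σ_i M[(i,j),(i,l)]`. -/
noncomputable def ptrace1 {n : ℕ} (M : Matrix (Fin n × Fin n) (Fin n × Fin n) ℂ) :
    Matrix (Fin n) (Fin n) ℂ :=
  Matrix.of fun j l => ∑ i : Fin n, M (i, j) (i, l)

/-!
The swap operator `S` is an involution, so the exponential series splits into its even and odd
parts: `exp (z S) = cosh z + sinh z S`. Conjugating `ρ ⊗ σ` by `exp (i t S)` therefore yields a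
combination of `ρ ⊗ σ`, `S (ρ ⊗ σ) S = σ ⊗ ρ`, `(ρ ⊗ σ) S` and `S (ρ ⊗ σ)`, whose partial traces are
`Tr(ρ) σ`, `Tr(σ) ρ`, `σ ρ` and `ρ σ`.
-/

section Involution

variable {A : Type*} [Ring A] [Algebra ℂ A] [TopologicalSpace A] [IsTopologicalRing A]
  [ContinuousSMul ℂ A] [T2Space A] {s : A}

lemma exp_smul_of_sq_eq_one (hs : s ^ 2 = 1) (z : ℂ) :
    NormedSpace.exp (z • s) = Complex.cosh z • 1 + Complex.sinh z • s := by
  have s_pow_even (k : ℕ) : s ^ (2 * k) = 1 := by rw [pow_mul, hs, one_pow]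
  have s_pow_odd (k : ℕ) : s ^ (2 * k + 1) = s := by rw [pow_succ, s_pow_even, one_mul]
  have exp_series_sum : HasSum (fun k : ℕ ↦ ((k.factorial : ℂ)⁻¹) • (z • s) ^ k)
      (Complex.cosh z • 1 + Complex.sinh z • s) := by
    refine HasSum.even_add_odd ?_ ?_
    · simpa only [smul_pow, s_pow_even, smul_smul, div_eq_inv_mul] using
        z.hasSum_cosh.smul_const (1 : A)
    · simpa only [smul_pow, s_pow_odd, smul_smul, div_eq_inv_mul] using z.hasSum_sinh.smul_const s
  rw [NormedSpace.exp_eq_tsum ℂ]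
  exact exp_series_sum.tsum_eq

lemma exp_I_mul_smul_of_sq_eq_one (hs : s ^ 2 = 1) (t : ℂ) :
    NormedSpace.exp ((Complex.I * t) • s) =
      Complex.cos t • 1 + (Complex.I * Complex.sin t) • s := by
  rw [exp_smul_of_sq_eq_one hs, mul_comm Complex.I t, Complex.cosh_mul_I, Complex.sinh_mul_I,
    mul_comm Complex.I]

lemma exp_I_mul_smul_conj_of_sq_eq_one (hs : s ^ 2 = 1) (t : ℂ) (a : A) :
    NormedSpace.exp ((-(Complex.I * t)) • s) * a * NormedSpace.exp ((Complex.I * t) • s) =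
      Complex.cos t ^ 2 • a + Complex.sin t ^ 2 • (s * a * s) -
        (Complex.I * Complex.sin t * Complex.cos t) • (s * a - a * s) := by
  have sin_sq : Complex.sin t ^ 2 = -(Complex.I * Complex.sin t) * (Complex.I * Complex.sin t) := by
    linear_combination Complex.sin t ^ 2 * Complex.I_mul_I
  rw [← mul_neg, exp_I_mul_smul_of_sq_eq_one hs, exp_I_mul_smul_of_sq_eq_one hs, Complex.cos_neg,
    Complex.sin_neg, mul_neg, sin_sq]
  simp only [add_mul, mul_add, smul_mul_assoc, mul_smul_comm, one_mul, mul_one]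
  module

end Involution

lemma kronecker_submatrix_swap {R l m n p : Type*} [CommMagma R]
    (M : Matrix l m R) (N : Matrix n p R) :
    (M ⊗ₖ N).submatrix Prod.swap Prod.swap = N ⊗ₖ M :=
  Matrix.ext fun _ _ ↦ mul_comm _ _

section Swap

variable {n : ℕ}

lemma swapOp_eq_permMatrix (n : ℕ) :
    swapOp n = Equiv.Perm.permMatrix ℂ (Equiv.prodComm (Fin n) (Fin n)) := by
  ext p q
  simp [swapOp, Equiv.toPEquiv_apply, Prod.ext_iff, and_comm]

lemma swapOp_mul {m : Type*} (M : Matrix (Fin n × Fin n) m ℂ) :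
    swapOp n * M = M.submatrix Prod.swap id := by
  rw [swapOp_eq_permMatrix, PEquiv.toMatrix_toPEquiv_mul, Equiv.coe_prodComm]

lemma mul_swapOp {m : Type*} (M : Matrix m (Fin n × Fin n) ℂ) :
    M * swapOp n = M.submatrix id Prod.swap := by
  rw [swapOp_eq_permMatrix, PEquiv.mul_toMatrix_toPEquiv, Equiv.prodComm_symm, Equiv.coe_prodComm]

lemma swapOp_sq (n : ℕ) : swapOp n ^ 2 = 1 := by
  have prodComm_sq : Equiv.prodComm (Fin n) (Fin n) * Equiv.prodComm (Fin n) (Fin n) = 1 := rfl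
  rw [swapOp_eq_permMatrix, sq, ← Matrix.permMatrix_mul, prodComm_sq, Matrix.permMatrix_one]

lemma swapOp_mul_kronecker_mul_swapOp (ρ σ : Matrix (Fin n) (Fin n) ℂ) :
    swapOp n * (ρ ⊗ₖ σ) * swapOp n = σ ⊗ₖ ρ := by
  rw [swapOp_mul, mul_swapOp, Matrix.submatrix_submatrix, Function.comp_id, Function.id_comp,
    kronecker_submatrix_swap]

end Swap

section PartialTrace

variable {n : ℕ}

lemma ptrace1_add (M N : Matrix (Fin n × Fin n) (Fin n × Fin n) ℂ) :
    ptrace1 (M + N) = ptrace1 M + ptrace1 N := by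
  ext j l
  simp [ptrace1, Finset.sum_add_distrib]

lemma ptrace1_sub (M N : Matrix (Fin n × Fin n) (Fin n × Fin n) ℂ) :
    ptrace1 (M - N) = ptrace1 M - ptrace1 N := by
  ext j l
  simp [ptrace1, Finset.sum_sub_distrib]

lemma ptrace1_smul (c : ℂ) (M : Matrix (Fin n × Fin n) (Fin n × Fin n) ℂ) :
    ptrace1 (c • M) = c • ptrace1 M := by
  ext j l
  simp [ptrace1, Finset.mul_sum]

lemma ptrace1_kronecker (ρ σ : Matrix (Fin n) (Fin n) ℂ) :
    ptrace1 (ρ ⊗ₖ σ) = ρ.trace • σ := by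
  ext j l
  simp [ptrace1, Matrix.trace, Finset.sum_mul]

lemma ptrace1_swapOp_mul_kronecker (ρ σ : Matrix (Fin n) (Fin n) ℂ) :
    ptrace1 (swapOp n * (ρ ⊗ₖ σ)) = ρ * σ := by
  rw [swapOp_mul]
  ext j l
  simp [ptrace1, Matrix.mul_apply]

lemma ptrace1_kronecker_mul_swapOp (ρ σ : Matrix (Fin n) (Fin n) ℂ) :
    ptrace1 ((ρ ⊗ₖ σ) * swapOp n) = σ * ρ := by
  rw [mul_swapOp]
  ext j l
  simp [ptrace1, Matrix.mul_apply, mul_comm]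

end PartialTrace

theorem ptrace1_exp_swap_conj_general {n : ℕ} (ρ σ : Matrix (Fin n) (Fin n) ℂ) (t : ℂ) :
    ptrace1 (NormedSpace.exp ((-(Complex.I * t)) • swapOp n) * (ρ ⊗ₖ σ) *
        NormedSpace.exp ((Complex.I * t) • swapOp n)) =
      (Complex.cos t ^ 2 * ρ.trace) • σ + (Complex.sin t ^ 2 * σ.trace) • ρ -
        (Complex.I * Complex.sin t * Complex.cos t) • (ρ * σ - σ * ρ) := by
  rw [exp_I_mul_smul_conj_of_sq_eq_one (swapOp_sq n), swapOp_mul_kronecker_mul_swapOp]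
  simp only [ptrace1_add, ptrace1_sub, ptrace1_smul, ptrace1_kronecker,
    ptrace1_swapOp_mul_kronecker, ptrace1_kronecker_mul_swapOp, smul_smul]

/-- `Tr₁[exp(−itS)(ρ⊗σ)exp(itS)]
      = cos²(t)·Tr(ρ)·σ + sin²(t)·Tr(σ)·ρ − i·sin(t)cos(t)·(ρσ − σρ)`. -/
theorem ptrace1_exp_swap_conj {n : ℕ} (hn : 1 ≤ n)
    (ρ σ : Matrix (Fin n) (Fin n) ℂ) (t : ℝ) :
    ptrace1 (NormedSpace.exp ((-(Complex.I * (t : ℂ))) • swapOp n) * (ρ ⊗ₖ σ) *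
        NormedSpace.exp ((Complex.I * (t : ℂ)) • swapOp n)) =
      ((Real.cos t : ℂ) ^ 2 * ρ.trace) • σ + ((Real.sin t : ℂ) ^ 2 * σ.trace) • ρ -
        (Complex.I * (Real.sin t : ℂ) * (Real.cos t : ℂ)) • (ρ * σ - σ * ρ) := by
  rw [Complex.ofReal_cos, Complex.ofReal_sin]
  exact ptrace1_exp_swap_conj_general ρ σ t
end

section
/- Let A be an n×n Hermitian positive semidefinite complex matrix with an orthonormal basis of eigenvectors λ₁,…,λₙ and corresponding eigenvalues r₁ > r₂ ≥ r₃ ≥ … ≥ rₙ ≥ 0 with r₁ > 0. Let x₀ ∈ ℂⁿ be a unit vector with c := |⟨λ₁, x₀⟩| > 0, and let x_k := Aᵏ x₀ for an integer k ≥ 0 (note x_k ≠ 0). Then the Rayleigh quotient R_k := ⟨x_k, A x_k⟩ / ‖x_k‖² satisfies 0 ≤ r₁ − R_k ≤ r₁ · ((1 − c²)/c²) · (r₂/r₁)^{2k}. -/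
open Matrix
open scoped ComplexOrder

/-!
Split `x₀ = a v + w` with `v` the dominant eigenvector and `w ⟂ v`, so that
`Aᵏ x₀ = a r₁ᵏ v + Aᵏ w`. The form `r₁‖y‖² - ⟨y, A y⟩` belongs to the symmetric operator `r₁ - A`,
which kills `v`; on `Aᵏ x₀` it therefore takes the same value as on `Aᵏ w`, which lies between `0`
and `r₁‖Aᵏ w‖² ≤ r₁ r₂^(2k) (1 - c²)`. Dividing by `‖Aᵏ x₀‖² ≥ |⟨v, Aᵏ x₀⟩|² = r₁^(2k) c²` gives
the bound.
-/

section

variable {𝕜 E : Type*} [RCLike 𝕜] [NormedAddCommGroup E] [InnerProductSpace 𝕜 E]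

theorem norm_sub_inner_smul_sq {v : E} (hv : ‖v‖ = 1) (x : E) :
    ‖x - inner 𝕜 v x • v‖ ^ 2 = ‖x‖ ^ 2 - ‖inner 𝕜 v x‖ ^ 2 := by
  rw [norm_sub_sq (𝕜 := 𝕜), inner_smul_right, inner_mul_symm_re_eq_norm, norm_mul,
    norm_inner_symm x v, norm_smul, hv]
  ring

theorem inner_sub_inner_smul_eq_zero {v : E} (hv : ‖v‖ = 1) (x : E) :
    inner 𝕜 v (x - inner 𝕜 v x • v) = 0 := by
  rw [inner_sub_right, inner_smul_right, inner_self_eq_one_of_norm_eq_one hv, mul_one, sub_self]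

theorem norm_apply_le_of_inner_eq_zero_of_eigenbasis {ι : Type*} [Fintype ι]
    (b : OrthonormalBasis ι 𝕜 E) {T : E →ₗ[𝕜] E} {μ : ι → 𝕜} (hμ : ∀ i, T (b i) = μ i • b i)
    {i₀ : ι} {s : ℝ} (hs₀ : 0 ≤ s) (hs : ∀ i ≠ i₀, ‖μ i‖ ≤ s) {y : E}
    (hy : inner 𝕜 (b i₀) y = 0) : ‖T y‖ ≤ s * ‖y‖ := by
  have inner_apply (i : ι) : inner 𝕜 (b i) (T y) = μ i * inner 𝕜 (b i) y := by
    classical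
    conv_lhs => rw [← b.sum_repr' y]
    simp [hμ, inner_sum, inner_smul_right, b.inner_eq_ite, mul_comm]
  refine le_of_sq_le_sq ?_ (by positivity)
  rw [mul_pow, ← b.sum_sq_norm_inner_right (T y), ← b.sum_sq_norm_inner_right y, Finset.mul_sum]
  refine Finset.sum_le_sum fun i _ ↦ ?_
  rw [inner_apply, norm_mul, mul_pow]
  rcases eq_or_ne i i₀ with rfl | hi
  · simp [hy]
  · gcongr
    exact hs i hi

namespace PowerMethod

variable {T : E →ₗ[𝕜] E} {v : E} {r s : ℝ}

theorem pow_apply_of_apply_eq_smul {μ : 𝕜} (hv : T v = μ • v) (k : ℕ) :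
    (T ^ k) v = μ ^ k • v := by
  induction k with
  | zero => simp
  | succ k ih => rw [pow_succ', Module.End.mul_apply, ih, map_smul, hv, smul_smul, pow_succ]

theorem inner_pow_apply (hT : T.IsSymmetric) (hv : T v = (r : 𝕜) • v) (k : ℕ) (x : E) :
    inner 𝕜 v ((T ^ k) x) = (r : 𝕜) ^ k * inner 𝕜 v x := by
  rw [← hT.pow k, pow_apply_of_apply_eq_smul hv, inner_smul_left, map_pow, RCLike.conj_ofReal]

theorem pow_mul_norm_inner_sq_le (hT : T.IsSymmetric) (hv₁ : ‖v‖ = 1) (hv : T v = (r : 𝕜) • v)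
    (k : ℕ) (x : E) : r ^ (2 * k) * ‖inner 𝕜 v x‖ ^ 2 ≤ ‖(T ^ k) x‖ ^ 2 :=
  calc
    r ^ (2 * k) * ‖inner 𝕜 v x‖ ^ 2 = ‖inner 𝕜 v ((T ^ k) x)‖ ^ 2 := by
      rw [inner_pow_apply hT hv, norm_mul, mul_pow, norm_pow, RCLike.norm_ofReal, ← pow_mul',
        pow_mul, pow_mul, sq_abs]
    _ ≤ (‖v‖ * ‖(T ^ k) x‖) ^ 2 := by gcongr; exact norm_inner_le_norm _ _
    _ = ‖(T ^ k) x‖ ^ 2 := by rw [hv₁, one_mul]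

theorem norm_pow_apply_le (hT : T.IsSymmetric) (hv : T v = (r : 𝕜) • v) (hs₀ : 0 ≤ s)
    (hs : ∀ y, inner 𝕜 v y = 0 → ‖T y‖ ≤ s * ‖y‖) {w : E} (hw : inner 𝕜 v w = 0) (k : ℕ) :
    ‖(T ^ k) w‖ ≤ s ^ k * ‖w‖ := by
  induction k with
  | zero => simp
  | succ k ih =>
    have orthogonal : inner 𝕜 v ((T ^ k) w) = 0 := by rw [inner_pow_apply hT hv, hw, mul_zero]
    calc
      ‖(T ^ (k + 1)) w‖ = ‖T ((T ^ k) w)‖ := by rw [pow_succ', Module.End.mul_apply]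
      _ ≤ s * ‖(T ^ k) w‖ := hs _ orthogonal
      _ ≤ s * (s ^ k * ‖w‖) := by gcongr
      _ = s ^ (k + 1) * ‖w‖ := by ring

theorem inner_add_apply_add_of_apply_eq_zero {S : E →ₗ[𝕜] E} (hS : S.IsSymmetric) {u : E}
    (hu : S u = 0) (z : E) : inner 𝕜 (u + z) (S (u + z)) = inner 𝕜 z (S z) := by
  rw [map_add, hu, zero_add, inner_add_left, ← hS, hu, inner_zero_left, zero_add]

/-- The unnormalised error `r‖y‖² - re ⟨y, T y⟩` of the Rayleigh quotient of `T` at `y` as an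
approximation of `r`; multiplying by `‖y‖²` keeps it meaningful at `y = 0`. -/
noncomputable def rayleighDefect (T : E →ₗ[𝕜] E) (r : ℝ) (y : E) : ℝ :=
  r * ‖y‖ ^ 2 - RCLike.re (inner 𝕜 y (T y))

theorem rayleighDefect_eq_re_inner (T : E →ₗ[𝕜] E) (r : ℝ) (y : E) :
    rayleighDefect T r y =
      RCLike.re (inner 𝕜 y (((r : 𝕜) • (LinearMap.id : E →ₗ[𝕜] E) - T) y)) := by
  simp [rayleighDefect, inner_sub_right, inner_smul_right]

theorem sub_rayleighQuotient_eq_rayleighDefect_div {y : E} (hy : y ≠ 0) :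
    r - RCLike.re (inner 𝕜 y (T y)) / ‖y‖ ^ 2 = rayleighDefect T r y / ‖y‖ ^ 2 := by
  have : ‖y‖ ≠ 0 := norm_ne_zero_iff.mpr hy
  rw [rayleighDefect]
  field_simp

theorem rayleighDefect_add_of_apply_eq_smul (hT : T.IsSymmetric) {u : E} (hu : T u = (r : 𝕜) • u)
    (z : E) : rayleighDefect T r (u + z) = rayleighDefect T r z := by
  have symmetric : ((r : 𝕜) • (LinearMap.id : E →ₗ[𝕜] E) - T).IsSymmetric :=
    (LinearMap.IsSymmetric.id.smul (RCLike.conj_ofReal r)).sub hT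
  rw [rayleighDefect_eq_re_inner, rayleighDefect_eq_re_inner,
    inner_add_apply_add_of_apply_eq_zero symmetric (by simp [hu])]

theorem rayleighDefect_pow_apply_eq (hT : T.IsSymmetric) (hv : T v = (r : 𝕜) • v) (a : 𝕜) (k : ℕ)
    (x : E) : rayleighDefect T r ((T ^ k) x) = rayleighDefect T r ((T ^ k) (x - a • v)) := by
  have eigen : T ((T ^ k) (a • v)) = (r : 𝕜) • (T ^ k) (a • v) := by
    rw [map_smul, pow_apply_of_apply_eq_smul hv, map_smul, map_smul, hv]
    module
  rw [← rayleighDefect_add_of_apply_eq_smul hT eigen ((T ^ k) (x - a • v)), ← map_add,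
    add_sub_cancel]

theorem rayleighDefect_nonneg {y : E} (hy : ‖T y‖ ≤ r * ‖y‖) : 0 ≤ rayleighDefect T r y :=
  sub_nonneg.mpr <|
    calc
      RCLike.re (inner 𝕜 y (T y)) ≤ ‖y‖ * ‖T y‖ := re_inner_le_norm _ _
      _ ≤ ‖y‖ * (r * ‖y‖) := by gcongr
      _ = r * ‖y‖ ^ 2 := by ring

theorem rayleighDefect_le (hT : T.IsPositive) (r : ℝ) (y : E) :
    rayleighDefect T r y ≤ r * ‖y‖ ^ 2 :=
  sub_le_self _ (hT.re_inner_nonneg_right y)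

theorem rayleighDefect_pow_apply_nonneg (hT : T.IsSymmetric) (hv₁ : ‖v‖ = 1)
    (hv : T v = (r : 𝕜) • v) (hr : ∀ y, inner 𝕜 v y = 0 → ‖T y‖ ≤ r * ‖y‖) (k : ℕ) (x : E) :
    0 ≤ rayleighDefect T r ((T ^ k) x) := by
  rw [rayleighDefect_pow_apply_eq hT hv (inner 𝕜 v x)]
  refine rayleighDefect_nonneg (hr _ ?_)
  rw [inner_pow_apply hT hv, inner_sub_inner_smul_eq_zero hv₁, mul_zero]

theorem rayleighDefect_pow_apply_le (hT : T.IsPositive) (hv₁ : ‖v‖ = 1) (hv : T v = (r : 𝕜) • v)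
    (hr : 0 ≤ r) (hs₀ : 0 ≤ s) (hs : ∀ y, inner 𝕜 v y = 0 → ‖T y‖ ≤ s * ‖y‖) (k : ℕ) (x : E) :
    rayleighDefect T r ((T ^ k) x) ≤ r * s ^ (2 * k) * (‖x‖ ^ 2 - ‖inner 𝕜 v x‖ ^ 2) := by
  set w := x - inner 𝕜 v x • v with hw
  calc
    rayleighDefect T r ((T ^ k) x) = rayleighDefect T r ((T ^ k) w) :=
      rayleighDefect_pow_apply_eq hT.isSymmetric hv _ k x
    _ ≤ r * ‖(T ^ k) w‖ ^ 2 := rayleighDefect_le hT r _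
    _ ≤ r * (s ^ k * ‖w‖) ^ 2 := by
      gcongr
      exact norm_pow_apply_le hT.isSymmetric hv hs₀ hs (inner_sub_inner_smul_eq_zero hv₁ x) k
    _ = r * s ^ (2 * k) * (‖x‖ ^ 2 - ‖inner 𝕜 v x‖ ^ 2) := by
      rw [← norm_sub_inner_smul_sq hv₁, ← hw]
      ring

end PowerMethod

open PowerMethod in
theorem power_method_rayleigh_quotient_bound_general {T : E →ₗ[𝕜] E} (hT : T.IsPositive)
    {v : E} (hv₁ : ‖v‖ = 1) {r s : ℝ} (hv : T v = (r : 𝕜) • v) (hr : 0 < r) (hs₀ : 0 ≤ s)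
    (hsr : s ≤ r) (hs : ∀ y, inner 𝕜 v y = 0 → ‖T y‖ ≤ s * ‖y‖) {x : E}
    (hx : inner 𝕜 v x ≠ 0) (k : ℕ) :
    0 ≤ r - RCLike.re (inner 𝕜 ((T ^ k) x) (T ((T ^ k) x))) / ‖(T ^ k) x‖ ^ 2 ∧
      r - RCLike.re (inner 𝕜 ((T ^ k) x) (T ((T ^ k) x))) / ‖(T ^ k) x‖ ^ 2 ≤
        r * ((‖x‖ ^ 2 - ‖inner 𝕜 v x‖ ^ 2) / ‖inner 𝕜 v x‖ ^ 2) * (s / r) ^ (2 * k) := by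
  have component_pos : 0 < r ^ (2 * k) * ‖inner 𝕜 v x‖ ^ 2 := by positivity
  have component_le := pow_mul_norm_inner_sq_le hT.isSymmetric hv₁ hv k x
  have iterate_ne_zero : (T ^ k) x ≠ 0 := fun h ↦ by
    rw [h, norm_zero, zero_pow two_ne_zero] at component_le
    exact component_le.not_gt component_pos
  have defect_nonneg : 0 ≤ rayleighDefect T r ((T ^ k) x) :=
    rayleighDefect_pow_apply_nonneg hT.isSymmetric hv₁ hv
      (fun y hy ↦ (hs y hy).trans (by gcongr)) k x
  have defect_le := rayleighDefect_pow_apply_le hT hv₁ hv hr.le hs₀ hs k x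
  rw [sub_rayleighQuotient_eq_rayleighDefect_div iterate_ne_zero]
  refine ⟨by positivity, ?_⟩
  calc
    rayleighDefect T r ((T ^ k) x) / ‖(T ^ k) x‖ ^ 2
      ≤ r * s ^ (2 * k) * (‖x‖ ^ 2 - ‖inner 𝕜 v x‖ ^ 2) / (r ^ (2 * k) * ‖inner 𝕜 v x‖ ^ 2) :=
        div_le_div₀ (defect_nonneg.trans defect_le) defect_le component_pos component_le
    _ = r * ((‖x‖ ^ 2 - ‖inner 𝕜 v x‖ ^ 2) / ‖inner 𝕜 v x‖ ^ 2) * (s / r) ^ (2 * k) := by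
      rw [div_pow]
      field_simp

end

/-- Error bound for the Rayleigh quotient of the power method: for a Hermitian
positive semidefinite `A` with orthonormal eigenbasis `λ₁,…,λₙ`, eigenvalues
`r₁ > r₂ ≥ … ≥ rₙ ≥ 0`, `r₁ > 0`, and a unit vector `x₀` with
`c = |⟨λ₁, x₀⟩| > 0`, the iterate `x_k = Aᵏ x₀` satisfies
`0 ≤ r₁ − R_k ≤ r₁·((1 − c²)/c²)·(r₂/r₁)^{2k}` where
`R_k = ⟨x_k, A x_k⟩/‖x_k‖²`. -/
theorem power_method_rayleigh_quotient_bound {n : ℕ}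
    (A : Matrix (Fin (n + 2)) (Fin (n + 2)) ℂ)
    (hA : A.PosSemidef)
    (lam : Fin (n + 2) → EuclideanSpace ℂ (Fin (n + 2)))
    (hon : Orthonormal ℂ lam)
    (r : Fin (n + 2) → ℝ)
    (heig : ∀ i, Matrix.toEuclideanLin A (lam i) = (r i : ℂ) • lam i)
    (hmono : ∀ i j : Fin (n + 2), i ≤ j → r j ≤ r i)
    (hnn : ∀ i, 0 ≤ r i)
    (hgap : r 1 < r 0) (hr0 : 0 < r 0)
    (x0 : EuclideanSpace ℂ (Fin (n + 2))) (hx0 : ‖x0‖ = 1)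
    (c : ℝ) (hc : c = ‖(inner ℂ (lam 0) x0 : ℂ)‖) (hcpos : 0 < c)
    (k : ℕ)
    (xk : EuclideanSpace ℂ (Fin (n + 2)))
    (hxk : xk = Matrix.toEuclideanLin (A ^ k) x0)
    (Rk : ℝ)
    (hRk : Rk = (inner ℂ xk (Matrix.toEuclideanLin A xk) : ℂ).re / ‖xk‖ ^ 2) :
    0 ≤ r 0 - Rk ∧ r 0 - Rk ≤ r 0 * ((1 - c ^ 2) / c ^ 2) * (r 1 / r 0) ^ (2 * k) := by
  let b := OrthonormalBasis.mk hon
    (hon.linearIndependent.span_eq_top_of_card_eq_finrank' (by simp)).ge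
  have hb : ⇑b = lam := OrthonormalBasis.coe_mk _ _
  have contraction (y) (hy : inner ℂ (lam 0) y = 0) : ‖toEuclideanLin A y‖ ≤ r 1 * ‖y‖ := by
    refine norm_apply_le_of_inner_eq_zero_of_eigenbasis b (hb ▸ heig) (hnn 1) (fun i hi ↦ ?_)
      (hb ▸ hy)
    rw [Complex.norm_of_nonneg (hnn i)]
    exact hmono 1 i (Fin.one_le_of_ne_zero hi)
  have overlap_ne_zero : inner ℂ (lam 0) x0 ≠ 0 := norm_pos_iff.mp (hc ▸ hcpos)
  have bound := power_method_rayleigh_quotient_bound_general (isPositive_toEuclideanLin_iff.mpr hA)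
    (hon.norm_eq_one 0) (heig 0) hr0 (hnn 1) hgap.le contraction overlap_ne_zero k
  rwa [← toLpLin_pow, ← hxk, RCLike.re_eq_complex_re, ← hRk, ← hc, hx0, one_pow] at bound
end

section
/- Let A be an n×n Hermitian positive semidefinite complex matrix with an orthonormal basis of eigenvectors λ₁,…,λₙ and corresponding eigenvalues r₁ > r₂ ≥ … ≥ rₙ ≥ 0 with r₁ > 0. Let x₀ ∈ ℂⁿ be a unit vector with c := |⟨λ₁, x₀⟩| > 0 and set x_k := Aᵏ x₀. Then the component of the normalized iterate orthogonal to the top eigenvector satisfies ‖ (I − λ₁λ₁†) x_k ‖ / ‖x_k‖ ≤ (√(1 − c²)/c) · (r₂/r₁)^{k}, i.e., the normalized power iterates converge geometrically (at rate r₂/r₁) to the eigenspace of the largest eigenvalue. -/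
open Matrix
open scoped ComplexOrder

/-!
Split `x = a v + y` with `v` the unit top eigenvector, of eigenvalue `μ`, and `y ⊥ v`. Since `T`
preserves `vᗮ`, the two parts evolve independently: `Tᵏ x = μᵏ a v + Tᵏ y` is again the orthogonal
decomposition along `v`. The first part has norm `|μ|ᵏ |a|`, which bounds `‖Tᵏ x‖` from below,
and the second has norm at most `ρᵏ ‖y‖`, where `ρ` bounds `T` on `vᗮ`.
-/

open scoped InnerProductSpace

section InnerProductSpace

variable {𝕜 E : Type*} [RCLike 𝕜] [NormedAddCommGroup E] [InnerProductSpace 𝕜 E]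

section UnitVector

variable {v : E}

theorem sub_inner_smul_mem_orthogonal_span_singleton (hv : ‖v‖ = 1) (x : E) :
    x - ⟪v, x⟫_𝕜 • v ∈ (𝕜 ∙ v)ᗮ := by
  rw [← Submodule.starProjection_unit_singleton 𝕜 hv]
  exact Submodule.sub_starProjection_mem_orthogonal x

theorem norm_sub_inner_smul_eq_sqrt (hv : ‖v‖ = 1) (x : E) :
    ‖x - ⟪v, x⟫_𝕜 • v‖ = √(‖x‖ ^ 2 - ‖⟪v, x⟫_𝕜‖ ^ 2) := by
  have pythagoras := (𝕜 ∙ v).norm_sq_eq_add_norm_sq_starProjection x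
  rw [Submodule.starProjection_orthogonal_val, Submodule.starProjection_unit_singleton 𝕜 hv,
    norm_smul, hv, mul_one] at pythagoras
  rw [pythagoras, add_sub_cancel_left, Real.sqrt_sq (norm_nonneg _)]

end UnitVector

section PowerIteration

variable {T : E →ₗ[𝕜] E} {ρ : ℝ}

theorem norm_pow_apply_le_of_mem_invtSubmodule {S : Submodule 𝕜 E}
    (hS : S ∈ Module.End.invtSubmodule T) (hρ : 0 ≤ ρ) (hTS : ∀ y ∈ S, ‖T y‖ ≤ ρ * ‖y‖)
    (k : ℕ) {y : E} (hy : y ∈ S) : ‖(T ^ k) y‖ ≤ ρ ^ k * ‖y‖ := by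
  induction k generalizing y with
  | zero => simp
  | succ k ih =>
    calc ‖(T ^ (k + 1)) y‖ = ‖(T ^ k) (T y)‖ := by rw [pow_succ, Module.End.mul_apply]
      _ ≤ ρ ^ k * ‖T y‖ := ih (hS hy)
      _ ≤ ρ ^ k * (ρ * ‖y‖) := by gcongr; exact hTS y hy
      _ = ρ ^ (k + 1) * ‖y‖ := by ring

variable {v : E} {μ : 𝕜}

theorem pow_apply_eq_smul_add_pow_apply (hTv : T v = μ • v) (k : ℕ) (x : E) :
    (T ^ k) x = (μ ^ k * ⟪v, x⟫_𝕜) • v + (T ^ k) (x - ⟪v, x⟫_𝕜 • v) := by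
  have pow_apply_eigenvector : (T ^ k) v = μ ^ k • v := by
    induction k with
    | zero => simp
    | succ k ih => rw [pow_succ, Module.End.mul_apply, hTv, map_smul, ih, smul_smul, pow_succ']
  rw [map_sub, map_smul, pow_apply_eigenvector, smul_smul, mul_comm, add_sub_cancel]

theorem inner_pow_apply_eq_pow_mul_inner (hv : ‖v‖ = 1) (hTv : T v = μ • v)
    (hinv : (𝕜 ∙ v)ᗮ ∈ Module.End.invtSubmodule T) (k : ℕ) (x : E) :
    ⟪v, (T ^ k) x⟫_𝕜 = μ ^ k * ⟪v, x⟫_𝕜 := by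
  have pow_apply_mem : (T ^ k) (x - ⟪v, x⟫_𝕜 • v) ∈ (𝕜 ∙ v)ᗮ := by
    rw [Module.End.pow_apply]
    exact (Module.End.mem_invtSubmodule_iff_mapsTo T |>.mp hinv).iterate k
      (sub_inner_smul_mem_orthogonal_span_singleton hv x)
  rw [pow_apply_eq_smul_add_pow_apply hTv, inner_add_right, inner_smul_right,
    inner_self_eq_one_of_norm_eq_one hv,
    Submodule.mem_orthogonal_singleton_iff_inner_right.mp pow_apply_mem, mul_one, add_zero]

theorem pow_apply_sub_inner_smul (hv : ‖v‖ = 1) (hTv : T v = μ • v)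
    (hinv : (𝕜 ∙ v)ᗮ ∈ Module.End.invtSubmodule T) (k : ℕ) (x : E) :
    (T ^ k) x - ⟪v, (T ^ k) x⟫_𝕜 • v = (T ^ k) (x - ⟪v, x⟫_𝕜 • v) := by
  rw [inner_pow_apply_eq_pow_mul_inner hv hTv hinv, sub_eq_iff_eq_add',
    ← pow_apply_eq_smul_add_pow_apply hTv]

theorem power_method_orthogonal_component_bound_general (hv : ‖v‖ = 1) (hTv : T v = μ • v)
    (hμ : μ ≠ 0) (hinv : (𝕜 ∙ v)ᗮ ∈ Module.End.invtSubmodule T) (hρ : 0 ≤ ρ)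
    (hbound : ∀ y ∈ (𝕜 ∙ v)ᗮ, ‖T y‖ ≤ ρ * ‖y‖) {x : E} (hx : ⟪v, x⟫_𝕜 ≠ 0) (k : ℕ) :
    ‖(T ^ k) x - ⟪v, (T ^ k) x⟫_𝕜 • v‖ / ‖(T ^ k) x‖ ≤
      √(‖x‖ ^ 2 - ‖⟪v, x⟫_𝕜‖ ^ 2) / ‖⟪v, x⟫_𝕜‖ * (ρ / ‖μ‖) ^ k := by
  have orthogonal_part_le :
      ‖(T ^ k) x - ⟪v, (T ^ k) x⟫_𝕜 • v‖ ≤ ρ ^ k * √(‖x‖ ^ 2 - ‖⟪v, x⟫_𝕜‖ ^ 2) := by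
    rw [pow_apply_sub_inner_smul hv hTv hinv, ← norm_sub_inner_smul_eq_sqrt hv]
    exact norm_pow_apply_le_of_mem_invtSubmodule hinv hρ hbound k
      (sub_inner_smul_mem_orthogonal_span_singleton hv x)
  have le_norm_iterate : ‖μ‖ ^ k * ‖⟪v, x⟫_𝕜‖ ≤ ‖(T ^ k) x‖ := by
    simpa [inner_pow_apply_eq_pow_mul_inner hv hTv hinv, hv] using
      norm_inner_le_norm (𝕜 := 𝕜) v ((T ^ k) x)
  calc ‖(T ^ k) x - ⟪v, (T ^ k) x⟫_𝕜 • v‖ / ‖(T ^ k) x‖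
      ≤ ρ ^ k * √(‖x‖ ^ 2 - ‖⟪v, x⟫_𝕜‖ ^ 2) / (‖μ‖ ^ k * ‖⟪v, x⟫_𝕜‖) := by gcongr
    _ = √(‖x‖ ^ 2 - ‖⟪v, x⟫_𝕜‖ ^ 2) / ‖⟪v, x⟫_𝕜‖ * (ρ / ‖μ‖) ^ k := by
      rw [mul_comm (ρ ^ k), mul_comm (‖μ‖ ^ k), mul_div_mul_comm, div_pow]

end PowerIteration

section Eigenbasis

variable {ι : Type*} [Fintype ι]

theorem exists_orthonormalBasis_coe_eq [FiniteDimensional 𝕜 E] {v : ι → E}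
    (hv : Orthonormal 𝕜 v) (hcard : Module.finrank 𝕜 E = Fintype.card ι) :
    ∃ b : OrthonormalBasis ι 𝕜 E, ⇑b = v := by
  have hv_univ : Orthonormal 𝕜 (Set.univ.domRestrict v) := hv.comp _ Subtype.val_injective
  obtain ⟨b, hb⟩ := hv_univ.exists_orthonormalBasis_extension_of_card_eq hcard
  exact ⟨b, funext fun i => hb i (Set.mem_univ i)⟩

variable {b : OrthonormalBasis ι 𝕜 E} {T : E →ₗ[𝕜] E} {μ : ι → 𝕜}

theorem inner_eigenbasis_apply (hT : ∀ i, T (b i) = μ i • b i) (i : ι) (x : E) :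
    ⟪b i, T x⟫_𝕜 = μ i * ⟪b i, x⟫_𝕜 := by
  classical
  conv_lhs => rw [← b.sum_repr' x]
  simp [hT, inner_sum, inner_smul_right, b.inner_eq_ite, mul_comm]

theorem orthogonal_span_eigenbasis_mem_invtSubmodule (hT : ∀ i, T (b i) = μ i • b i) (i : ι) :
    (𝕜 ∙ b i)ᗮ ∈ Module.End.invtSubmodule T := by
  intro y hy
  rw [Submodule.mem_orthogonal_singleton_iff_inner_right] at hy
  rw [Submodule.mem_comap, Submodule.mem_orthogonal_singleton_iff_inner_right,
    inner_eigenbasis_apply hT, hy, mul_zero]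

theorem norm_apply_le_of_mem_orthogonal_span_eigenbasis (hT : ∀ i, T (b i) = μ i • b i)
    {i₀ : ι} {ρ : ℝ} (hρ : 0 ≤ ρ) (hμ : ∀ i ≠ i₀, ‖μ i‖ ≤ ρ) {y : E} (hy : y ∈ (𝕜 ∙ b i₀)ᗮ) :
    ‖T y‖ ≤ ρ * ‖y‖ := by
  rw [Submodule.mem_orthogonal_singleton_iff_inner_right] at hy
  have coordinate_le (i : ι) : ‖⟪b i, T y⟫_𝕜‖ ≤ ρ * ‖⟪b i, y⟫_𝕜‖ := by
    rw [inner_eigenbasis_apply hT, norm_mul]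
    obtain rfl | hi := eq_or_ne i i₀
    · simp [hy]
    · gcongr
      exact hμ i hi
  refine le_of_sq_le_sq ?_ (by positivity)
  calc ‖T y‖ ^ 2 = ∑ i, ‖⟪b i, T y⟫_𝕜‖ ^ 2 := (b.sum_sq_norm_inner_right _).symm
    _ ≤ ∑ i, (ρ * ‖⟪b i, y⟫_𝕜‖) ^ 2 := by gcongr with i; exact coordinate_le i
    _ = (ρ * ‖y‖) ^ 2 := by
      simp only [mul_pow, ← Finset.mul_sum, b.sum_sq_norm_inner_right]

end Eigenbasis

end InnerProductSpace

/-- Geometric convergence of normalized power iterates to the top eigenspace: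
for a Hermitian positive semidefinite `A` with orthonormal eigenbasis, eigenvalues
`r₁ > r₂ ≥ … ≥ rₙ ≥ 0`, `r₁ > 0`, and a unit vector `x₀` with
`c = |⟨λ₁, x₀⟩| > 0`, the iterate `x_k = Aᵏ x₀` satisfies
`‖(I − λ₁λ₁†) x_k‖/‖x_k‖ ≤ (√(1 − c²)/c)·(r₂/r₁)^k`. -/
theorem power_method_orthogonal_component_bound {n : ℕ}
    (A : Matrix (Fin (n + 2)) (Fin (n + 2)) ℂ)
    (hA : A.PosSemidef)
    (lam : Fin (n + 2) → EuclideanSpace ℂ (Fin (n + 2)))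
    (hon : Orthonormal ℂ lam)
    (r : Fin (n + 2) → ℝ)
    (heig : ∀ i, Matrix.toEuclideanLin A (lam i) = (r i : ℂ) • lam i)
    (hmono : ∀ i j : Fin (n + 2), i ≤ j → r j ≤ r i)
    (hnn : ∀ i, 0 ≤ r i)
    (hgap : r 1 < r 0) (hr0 : 0 < r 0)
    (x0 : EuclideanSpace ℂ (Fin (n + 2))) (hx0 : ‖x0‖ = 1)
    (c : ℝ) (hc : c = ‖(inner ℂ (lam 0) x0 : ℂ)‖) (hcpos : 0 < c)
    (k : ℕ)
    (xk : EuclideanSpace ℂ (Fin (n + 2)))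
    (hxk : xk = Matrix.toEuclideanLin (A ^ k) x0) :
    ‖xk - (inner ℂ (lam 0) xk : ℂ) • lam 0‖ / ‖xk‖ ≤
      (Real.sqrt (1 - c ^ 2) / c) * (r 1 / r 0) ^ k := by
  obtain ⟨b, rfl⟩ := exists_orthonormalBasis_coe_eq hon (by simp)
  have norm_le_second (i : Fin (n + 2)) (hi : i ≠ 0) : ‖(r i : ℂ)‖ ≤ r 1 := by
    simpa [abs_of_nonneg (hnn i)] using hmono 1 i (Fin.one_le_of_ne_zero hi)
  subst hc hxk
  simpa [hx0, abs_of_pos hr0, Matrix.toLpLin_pow] using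
    power_method_orthogonal_component_bound_general (b.norm_eq_one 0) (heig 0)
      (Complex.ofReal_ne_zero.mpr hr0.ne') (orthogonal_span_eigenbasis_mem_invtSubmodule heig 0)
      (hnn 1) (fun _ => norm_apply_le_of_mem_orthogonal_span_eigenbasis heig (hnn 1) norm_le_second)
      (norm_pos_iff.mp hcpos) k
end
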